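/- Let ψ be a non-leaking tripartite embedding of a probability mass function P on a finite set 𝒳×𝒴. Then there exist unitaries U on the A-register and V on the B-register of the form U|x⟩_A = |f_X(x)⟩_Ã ⊗ |μ_x⟩_{Ã⊥} and V|y⟩_B = |f_Y(y)⟩_B̃ ⊗ |ν_y⟩_{B̃⊥} (with unit vectors μ_x mutually orthogonal whenever x ≠ x' and f_X(x) = f_X(x'), and similarly for ν_y) such that: the state obtained from tr_{EA'}|ψ⟩⟨ψ| by measuring register A in the computational basis (yielding outcome X) and applying V to register B equals Σ_{x,ỹ} P_{X,Y↘X}(x,ỹ) |x⟩⟨x|_X ⊗ |ỹ⟩⟨ỹ|_B̃ ⊗ σ^{ỹ}_{B̃⊥B'} for some density matrices σ^{ỹ} depending only on ỹ; and symmetrically, the state obtained from tr_{EB'}|ψ⟩⟨ψ| by measuring register B (yielding Y) and applying U to register A equals Σ_{x̃,y} P_{X↘Y,Y}(x̃,y) |x̃⟩⟨x̃|_Ã ⊗ |y⟩⟨y|_Y ⊗ τ^{x̃}_{Ã⊥A'} for density matrices τ^{x̃} depending only on x̃. -/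

import Mathlib

open scoped BigOperators
open Matrix
open scoped ComplexOrder

attribute [local instance 10] Classical.propDecidable

noncomputable section

/-- Base-2 Shannon entropy of a finitely supported real function. -/
def shannonEntropy {α : Type*} [Fintype α] (p : α → ℝ) : ℝ :=
  -∑ x, p x * Real.logb 2 (p x)

/-- Von Neumann entropy: base-2 Shannon entropy of the eigenvalue multiset. -/
def vonNeumannEntropy {n : Type*} [Fintype n] [DecidableEq n] (ρ : Matrix n n ℂ) : ℝ :=
  if h : ρ.IsHermitian then shannonEntropy h.eigenvalues else 0

def IsDensityMatrix {n : Type*} [Fintype n] [DecidableEq n] (ρ : Matrix n n ℂ) : Prop :=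
  ρ.PosSemidef ∧ ρ.trace = 1

variable {𝒳 𝒴 : Type*} [Fintype 𝒳] [Fintype 𝒴] [DecidableEq 𝒳] [DecidableEq 𝒴]

def margX (P : 𝒳 × 𝒴 → ℝ) (x : 𝒳) : ℝ := ∑ y, P (x, y)

def margY (P : 𝒳 × 𝒴 → ℝ) (y : 𝒴) : ℝ := ∑ x, P (x, y)

/-- Classical base-2 mutual information `I(X;Y) = H(X) + H(Y) − H(X,Y)`. -/
def mutualInfo (P : 𝒳 × 𝒴 → ℝ) : ℝ :=
  shannonEntropy (margX P) + shannonEntropy (margY P) - shannonEntropy P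

/-- `f_X(x) = P_{Y|X=x}`: the dependent-part map of `X` w.r.t. `Y` (`X↘Y = f_X(X)`). -/
def condYX (P : 𝒳 × 𝒴 → ℝ) (x : 𝒳) : 𝒴 → ℝ := fun y => P (x, y) / margX P x

/-- `f_Y(y) = P_{X|Y=y}`: the dependent-part map of `Y` w.r.t. `X` (`Y↘X = f_Y(Y)`). -/
def condXY (P : 𝒳 × 𝒴 → ℝ) (y : 𝒴) : 𝒳 → ℝ := fun x => P (x, y) / margY P y

section tripartite

variable {dE dA dB : ℕ}

/-- The ccq-state on `X Y B'` (`X`, `Y` measured; `E`, `A'` traced out) of the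
tripartite state `ψ ∈ ℂ^{E} ⊗ ℂ^𝒳 ⊗ ℂ^𝒴 ⊗ ℂ^{A'} ⊗ ℂ^{B'}`. -/
def triXYBp (ψ : Fin dE × 𝒳 × 𝒴 × Fin dA × Fin dB → ℂ) :
    Matrix (Fin dB × (𝒳 × 𝒴)) (Fin dB × (𝒳 × 𝒴)) ℂ :=
  Matrix.blockDiagonal fun p : 𝒳 × 𝒴 => fun b b' =>
    ∑ e, ∑ a, ψ (e, p.1, p.2, a, b) * (starRingEnd ℂ) (ψ (e, p.1, p.2, a, b'))

/-- The cq-state on `Y B'`. -/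
def triYBp (ψ : Fin dE × 𝒳 × 𝒴 × Fin dA × Fin dB → ℂ) :
    Matrix (Fin dB × 𝒴) (Fin dB × 𝒴) ℂ :=
  Matrix.blockDiagonal fun y : 𝒴 => fun b b' =>
    ∑ e, ∑ x, ∑ a, ψ (e, x, y, a, b) * (starRingEnd ℂ) (ψ (e, x, y, a, b'))

/-- The ccq-state on `X A' Y` (`X`, `Y` measured; `E`, `B'` traced out). -/
def triXYAp (ψ : Fin dE × 𝒳 × 𝒴 × Fin dA × Fin dB → ℂ) :
    Matrix (Fin dA × (𝒳 × 𝒴)) (Fin dA × (𝒳 × 𝒴)) ℂ :=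
  Matrix.blockDiagonal fun p : 𝒳 × 𝒴 => fun a a' =>
    ∑ e, ∑ b, ψ (e, p.1, p.2, a, b) * (starRingEnd ℂ) (ψ (e, p.1, p.2, a', b))

/-- The cq-state on `X A'`. -/
def triXAp (ψ : Fin dE × 𝒳 × 𝒴 × Fin dA × Fin dB → ℂ) :
    Matrix (Fin dA × 𝒳) (Fin dA × 𝒳) ℂ :=
  Matrix.blockDiagonal fun x : 𝒳 => fun a a' =>
    ∑ e, ∑ y, ∑ b, ψ (e, x, y, a, b) * (starRingEnd ℂ) (ψ (e, x, y, a', b))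

/-- `S(X;YB') = H(X) + S(YB') − S(XYB')`, with `X` and `Y` measured. -/
def StriXYBp (P : 𝒳 × 𝒴 → ℝ) (ψ : Fin dE × 𝒳 × 𝒴 × Fin dA × Fin dB → ℂ) : ℝ :=
  shannonEntropy (margX P) + vonNeumannEntropy (triYBp ψ) - vonNeumannEntropy (triXYBp ψ)

/-- `S(XA';Y) = S(XA') + H(Y) − S(XA'Y)`, with `X` and `Y` measured. -/
def StriXApY (P : 𝒳 × 𝒴 → ℝ) (ψ : Fin dE × 𝒳 × 𝒴 × Fin dA × Fin dB → ℂ) : ℝ :=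
  vonNeumannEntropy (triXAp ψ) + shannonEntropy (margY P) - vonNeumannEntropy (triXYAp ψ)

/-- The cq-state on `X B B'` (only `A` measured; `E`, `A'` traced out). -/
def triXBB (ψ : Fin dE × 𝒳 × 𝒴 × Fin dA × Fin dB → ℂ) :
    Matrix ((𝒴 × Fin dB) × 𝒳) ((𝒴 × Fin dB) × 𝒳) ℂ :=
  Matrix.blockDiagonal fun x : 𝒳 => fun p q =>
    ∑ e, ∑ a, ψ (e, x, p.1, a, p.2) * (starRingEnd ℂ) (ψ (e, x, q.1, a, q.2))

/-- The reduced state on `B B'`. -/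
def triBB (ψ : Fin dE × 𝒳 × 𝒴 × Fin dA × Fin dB → ℂ) :
    Matrix (𝒴 × Fin dB) (𝒴 × Fin dB) ℂ := fun p q =>
  ∑ e, ∑ x, ∑ a, ψ (e, x, p.1, a, p.2) * (starRingEnd ℂ) (ψ (e, x, q.1, a, q.2))

/-- `S(X;BB') = H(X) + S(BB') − S(XBB')`. -/
def StriXBB (P : 𝒳 × 𝒴 → ℝ) (ψ : Fin dE × 𝒳 × 𝒴 × Fin dA × Fin dB → ℂ) : ℝ :=
  shannonEntropy (margX P) + vonNeumannEntropy (triBB ψ) - vonNeumannEntropy (triXBB ψ)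

/-- The cq-state on `A A' Y` (only `B` measured; `E`, `B'` traced out). -/
def triYAA (ψ : Fin dE × 𝒳 × 𝒴 × Fin dA × Fin dB → ℂ) :
    Matrix ((𝒳 × Fin dA) × 𝒴) ((𝒳 × Fin dA) × 𝒴) ℂ :=
  Matrix.blockDiagonal fun y : 𝒴 => fun p q =>
    ∑ e, ∑ b, ψ (e, p.1, y, p.2, b) * (starRingEnd ℂ) (ψ (e, q.1, y, q.2, b))

/-- The reduced state on `A A'`. -/
def triAA (ψ : Fin dE × 𝒳 × 𝒴 × Fin dA × Fin dB → ℂ) :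
    Matrix (𝒳 × Fin dA) (𝒳 × Fin dA) ℂ := fun p q =>
  ∑ e, ∑ y, ∑ b, ψ (e, p.1, y, p.2, b) * (starRingEnd ℂ) (ψ (e, q.1, y, q.2, b))

/-- `S(AA';Y) = S(AA') + H(Y) − S(AA'Y)`. -/
def StriAAY (P : 𝒳 × 𝒴 → ℝ) (ψ : Fin dE × 𝒳 × 𝒴 × Fin dA × Fin dB → ℂ) : ℝ :=
  vonNeumannEntropy (triAA ψ) + shannonEntropy (margY P) - vonNeumannEntropy (triYAA ψ)

end tripartite

/-! ### Scalar and spectral preliminaries -/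

lemma tendsto_sum_mul_log_add_atTop {κ : Type*} [Fintype κ] (c s : κ → ℝ)
    (hc : ∑ k, c k = 0) :
    Filter.Tendsto (fun t : ℝ => ∑ k, c k * Real.log (s k + t)) Filter.atTop (nhds 0) := by
  have h1 : (fun t : ℝ => ∑ k, c k * Real.log (s k + t)) =
      fun t => ∑ k, c k * (Real.log (t + s k) - Real.log t) := by
    funext t
    simp only [mul_sub, Finset.sum_sub_distrib, ← Finset.sum_mul, hc, zero_mul, sub_zero]
    simp only [add_comm]
  rw [h1]
  simpa using tendsto_finsetSum Finset.univ
    (fun k _ => (Real.tendsto_log_comp_add_sub_log (s k)).const_mul (c k))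

lemma hasDerivAt_sum_mul_log_add {κ : Type*} [Fintype κ] (c s : κ → ℝ)
    (hs : ∀ k, c k ≠ 0 → 0 < s k) {t : ℝ} (ht : 0 ≤ t) :
    HasDerivAt (fun t : ℝ => ∑ k, c k * Real.log (s k + t)) (∑ k, c k / (s k + t)) t := by
  refine HasDerivAt.fun_sum fun k _ => ?_
  by_cases hk : c k = 0
  · simpa [hk] using hasDerivAt_const t (0 : ℝ)
  · have h0 : s k + t ≠ 0 := (add_pos_of_pos_of_nonneg (hs k hk) ht).ne'
    simpa [mul_one_div, div_eq_mul_inv] using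
      (((hasDerivAt_id t).const_add (s k)).log h0).const_mul (c k)

lemma monotoneOn_sum_mul_log_add {κ : Type*} [Fintype κ] (c s : κ → ℝ)
    (hs : ∀ k, c k ≠ 0 → 0 < s k) (hF : ∀ t : ℝ, 0 < t → 0 ≤ ∑ k, c k / (s k + t)) :
    MonotoneOn (fun t : ℝ => ∑ k, c k * Real.log (s k + t)) (Set.Ici 0) := by
  refine monotoneOn_of_deriv_nonneg (convex_Ici 0) ?_ ?_ ?_
  · exact fun t ht => (hasDerivAt_sum_mul_log_add c s hs ht).continuousAt.continuousWithinAt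
  · intro t ht
    rw [interior_Ici] at ht
    exact (hasDerivAt_sum_mul_log_add c s hs ht.le).differentiableAt.differentiableWithinAt
  · intro t ht
    rw [interior_Ici] at ht
    rw [(hasDerivAt_sum_mul_log_add c s hs ht.le).deriv]
    exact hF t ht

lemma sum_mul_log_add_nonpos {κ : Type*} [Fintype κ] (c s : κ → ℝ) (hc : ∑ k, c k = 0)
    (hs : ∀ k, c k ≠ 0 → 0 < s k) (hF : ∀ t : ℝ, 0 < t → 0 ≤ ∑ k, c k / (s k + t))
    {t : ℝ} (ht : 0 ≤ t) : ∑ k, c k * Real.log (s k + t) ≤ 0 := by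
  refine ge_of_tendsto (tendsto_sum_mul_log_add_atTop c s hc) ?_
  filter_upwards [Filter.eventually_ge_atTop t] with u hu
  exact monotoneOn_sum_mul_log_add c s hs hF ht (ht.trans hu) hu

lemma sum_mul_log_nonpos {κ : Type*} [Fintype κ] (c s : κ → ℝ) (hc : ∑ k, c k = 0)
    (hs : ∀ k, c k ≠ 0 → 0 < s k) (hF : ∀ t : ℝ, 0 < t → 0 ≤ ∑ k, c k / (s k + t)) :
    ∑ k, c k * Real.log (s k) ≤ 0 := by
  simpa using sum_mul_log_add_nonpos c s hc hs hF le_rfl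

lemma sum_div_add_eq_zero_of_sum_mul_log_eq_zero {κ : Type*} [Fintype κ] (c s : κ → ℝ)
    (hc : ∑ k, c k = 0) (hs : ∀ k, c k ≠ 0 → 0 < s k)
    (hF : ∀ t : ℝ, 0 < t → 0 ≤ ∑ k, c k / (s k + t))
    (h0 : ∑ k, c k * Real.log (s k) = 0) {t : ℝ} (ht : 0 < t) :
    ∑ k, c k / (s k + t) = 0 := by
  have hG : (fun t : ℝ => ∑ k, c k * Real.log (s k + t)) =ᶠ[nhds t] fun _ => 0 := by
    filter_upwards [lt_mem_nhds ht] with u hu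
    refine le_antisymm (sum_mul_log_add_nonpos c s hc hs hF hu.le) ?_
    have := monotoneOn_sum_mul_log_add c s hs hF Set.self_mem_Ici hu.le hu.le
    simpa [h0] using this
  have h1 := (hasDerivAt_sum_mul_log_add c s hs ht.le).congr_of_eventuallyEq hG.symm
  exact h1.unique (hasDerivAt_const t 0)

lemma shannonEntropy_eq {α : Type*} [Fintype α] (p : α → ℝ) :
    shannonEntropy p = -(∑ x, p x * Real.log (p x)) / Real.log 2 := by
  simp only [shannonEntropy, Real.logb, mul_div_assoc', Finset.sum_div, neg_div]

lemma shannonEntropy_comp_equiv {α β : Type*} [Fintype α] [Fintype β] (e : α ≃ β)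
    (p : β → ℝ) : shannonEntropy (fun a => p (e a)) = shannonEntropy p := by
  simp only [shannonEntropy]
  rw [Equiv.sum_comp e fun b => p b * Real.logb 2 (p b)]

lemma vonNeumannEntropy_eq_sum_roots {n : Type*} [Fintype n] [DecidableEq n]
    {ρ : Matrix n n ℂ} (h : ρ.IsHermitian) :
    vonNeumannEntropy ρ = -(ρ.charpoly.roots.map fun z => z.re * Real.logb 2 z.re).sum := by
  rw [vonNeumannEntropy, dif_pos h, h.roots_charpoly_eq_eigenvalues, shannonEntropy]
  simp

lemma charpoly_blockDiagonal {n o : Type*} [Fintype n] [DecidableEq n] [Fintype o]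
    [DecidableEq o] {R : Type*} [CommRing R] (M : o → Matrix n n R) :
    (blockDiagonal M).charpoly = ∏ k, (M k).charpoly := by
  have : (blockDiagonal M).charmatrix = blockDiagonal fun k => (M k).charmatrix := by
    ext ⟨i, k⟩ ⟨j, l⟩
    by_cases hkl : k = l
    · subst hkl
      simp [charmatrix_apply, blockDiagonal_apply, diagonal_apply]
    · simp [blockDiagonal_apply, hkl]
  simp only [Matrix.charpoly, this, det_blockDiagonal]

lemma vonNeumannEntropy_blockDiagonal {n o : Type*} [Fintype n] [DecidableEq n] [Fintype o]
    [DecidableEq o] (M : o → Matrix n n ℂ) (hM : ∀ k, (M k).IsHermitian) :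
    vonNeumannEntropy (blockDiagonal M) = ∑ k, vonNeumannEntropy (M k) := by
  have h : (blockDiagonal M).IsHermitian := by
    rw [IsHermitian, blockDiagonal_conjTranspose]
    exact congrArg _ (funext hM)
  rw [vonNeumannEntropy_eq_sum_roots h, charpoly_blockDiagonal, Polynomial.roots_prod _ _
    (Finset.prod_ne_zero_iff.mpr fun k _ => (charpoly_monic (M k)).ne_zero)]
  simp_rw [vonNeumannEntropy_eq_sum_roots (hM _)]
  rw [Multiset.map_bind, Multiset.sum_bind, Finset.sum_neg_distrib]
  rfl

/-! ### A variational bound in two eigenbases -/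

section eigenbases

variable {n : Type*} [Fintype n] [DecidableEq n] {A B U W : Matrix n n ℂ} {α β : n → ℝ}

lemma trace_conj_of_unitary (hU : U * Uᴴ = 1) (M : Matrix n n ℂ) :
    (Uᴴ * M * U).trace = M.trace := by
  rw [trace_mul_comm, ← Matrix.mul_assoc, hU, Matrix.one_mul]

lemma re_trace_mul_eq (hU : U * Uᴴ = 1) (hU' : Uᴴ * U = 1) (hW : W * Wᴴ = 1)
    (hA : A = U * diagonal (fun i => (α i : ℂ)) * Uᴴ) (K : Matrix n n ℂ) :
    (A * K).trace.re = ∑ j, ∑ i, α i *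
      ((starRingEnd ℂ) ((Wᴴ * U) j i) * (Wᴴ * K * U) j i).re := by
  have h : Uᴴ * (A * K) * U =
      diagonal (fun i => (α i : ℂ)) * ((Wᴴ * U)ᴴ * (Wᴴ * K * U)) := by
    calc Uᴴ * (A * K) * U
        = (Uᴴ * U) * diagonal (fun i => (α i : ℂ)) * Uᴴ * (W * Wᴴ) * K * U := by
          rw [hA, hW]; simp only [Matrix.mul_assoc, Matrix.one_mul]
      _ = _ := by
          rw [hU', Matrix.one_mul, conjTranspose_mul, conjTranspose_conjTranspose]
          simp only [Matrix.mul_assoc]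
  rw [← trace_conj_of_unitary hU, h, Finset.sum_comm]
  generalize Wᴴ * K * U = Kt
  generalize Wᴴ * U = D
  simp only [trace, diag_apply, Matrix.mul_apply, conjTranspose_apply, diagonal_apply, ite_mul,
    zero_mul, Finset.sum_ite_eq, Finset.mem_univ, if_true]
  simp only [Complex.re_sum, Complex.re_ofReal_mul, Finset.mul_sum]
  rfl

lemma re_trace_conjTranspose_mul_mul_eq (hU : U * Uᴴ = 1)
    (hB : B = W * diagonal (fun i => (β i : ℂ)) * Wᴴ) (K : Matrix n n ℂ) :
    (Kᴴ * B * K).trace.re = ∑ j, ∑ i, β j * Complex.normSq ((Wᴴ * K * U) j i) := by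
  have h : Uᴴ * (Kᴴ * B * K) * U =
      (Wᴴ * K * U)ᴴ * (diagonal (fun i => (β i : ℂ)) * (Wᴴ * K * U)) := by
    rw [hB]
    simp only [conjTranspose_mul, conjTranspose_conjTranspose, Matrix.mul_assoc]
  rw [← trace_conj_of_unitary hU, h, Finset.sum_comm]
  generalize Wᴴ * K * U = Kt
  simp only [trace, diag_apply, Matrix.mul_apply, conjTranspose_apply,
    Complex.re_sum, diagonal_apply, ite_mul, zero_mul, Finset.sum_ite_eq, Finset.mem_univ,
    if_true]
  refine Finset.sum_congr rfl fun i _ => Finset.sum_congr rfl fun j _ => ?_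
  simp [Complex.normSq_apply]
  ring

lemma re_trace_mul_mul_conjTranspose_eq (hW : W * Wᴴ = 1)
    (hA : A = U * diagonal (fun i => (α i : ℂ)) * Uᴴ) (K : Matrix n n ℂ) :
    (K * A * Kᴴ).trace.re = ∑ j, ∑ i, α i * Complex.normSq ((Wᴴ * K * U) j i) := by
  have h : Wᴴ * (K * A * Kᴴ) * W =
      (Wᴴ * K * U) * (diagonal (fun i => (α i : ℂ)) * (Wᴴ * K * U)ᴴ) := by
    rw [hA]
    simp only [conjTranspose_mul, conjTranspose_conjTranspose, Matrix.mul_assoc]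
  rw [← trace_conj_of_unitary hW, h]
  generalize Wᴴ * K * U = Kt
  simp only [trace, diag_apply, Matrix.mul_apply, conjTranspose_apply,
    Complex.re_sum, diagonal_apply, ite_mul, zero_mul, Finset.sum_ite_eq, Finset.mem_univ,
    if_true]
  refine Finset.sum_congr rfl fun i _ => Finset.sum_congr rfl fun j _ => ?_
  simp [Complex.normSq_apply]
  ring

lemma sum_weight_div_sub_eq (hU : U * Uᴴ = 1) (hU' : Uᴴ * U = 1) (hW : W * Wᴴ = 1)
    (hA : A = U * diagonal (fun i => (α i : ℂ)) * Uᴴ)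
    (hB : B = W * diagonal (fun i => (β i : ℂ)) * Wᴴ)
    (hα : ∀ i, 0 ≤ α i) (hβ : ∀ i, 0 ≤ β i) (K : Matrix n n ℂ) {t : ℝ} (ht : 0 < t) :
    (∑ j, ∑ i, Complex.normSq ((Wᴴ * U) j i) * (α i ^ 2 / (β j + t * α i))) -
      (2 * (A * K).trace.re - (Kᴴ * B * K).trace.re - t * (K * A * Kᴴ).trace.re) =
    ∑ j, ∑ i, (β j + t * α i) * Complex.normSq ((Wᴴ * K * U) j i -
      ((α i / (β j + t * α i) : ℝ) : ℂ) * (Wᴴ * U) j i) := by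
  rw [re_trace_mul_eq hU hU' hW hA, re_trace_conjTranspose_mul_mul_eq hU hB,
    re_trace_mul_mul_conjTranspose_eq hW hA]
  simp only [Finset.mul_sum, ← Finset.sum_sub_distrib]
  refine Finset.sum_congr rfl fun j _ => Finset.sum_congr rfl fun i _ => ?_
  generalize (Wᴴ * K * U) j i = k
  generalize (Wᴴ * U) j i = d
  rcases (add_nonneg (hβ j) (mul_nonneg ht.le (hα i))).eq_or_lt with h | h
  · have h1 : t * α i = 0 := by nlinarith [hβ j, mul_nonneg ht.le (hα i)]
    have h2 : α i = 0 := (mul_eq_zero.mp h1).resolve_left ht.ne'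
    have h3 : β j = 0 := by rw [h2] at h; linarith
    simp [h2, h3]
  · simp only [Complex.normSq_apply, Complex.mul_re, Complex.sub_re, Complex.sub_im,
      Complex.mul_im, Complex.ofReal_re, Complex.ofReal_im, Complex.conj_re, Complex.conj_im]
    obtain ⟨s, hs⟩ : ∃ s, s = β j + t * α i := ⟨_, rfl⟩
    have hb : β j = s - t * α i := by rw [hs]; ring
    rw [← hs] at h ⊢
    rw [hb]
    field_simp
    ring

lemma eq_mul_add_smul_mul_of_sum_eq (hU : U * Uᴴ = 1) (hU' : Uᴴ * U = 1) (hW : W * Wᴴ = 1)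
    (hW' : Wᴴ * W = 1)
    (hA : A = U * diagonal (fun i => (α i : ℂ)) * Uᴴ)
    (hB : B = W * diagonal (fun i => (β i : ℂ)) * Wᴴ)
    (hα : ∀ i, 0 ≤ α i) (hβ : ∀ i, 0 ≤ β i) (K : Matrix n n ℂ) {t : ℝ} (ht : 0 < t)
    (heq : (∑ j, ∑ i, Complex.normSq ((Wᴴ * U) j i) * (α i ^ 2 / (β j + t * α i))) =
      2 * (A * K).trace.re - (Kᴴ * B * K).trace.re - t * (K * A * Kᴴ).trace.re) :
    A = B * K + (t : ℂ) • (K * A) := by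
  have h0 := sum_weight_div_sub_eq hU hU' hW hA hB hα hβ K ht
  rw [heq, sub_self, eq_comm] at h0
  have hnn : ∀ j i, 0 ≤ β j + t * α i :=
    fun j i => add_nonneg (hβ j) (mul_nonneg ht.le (hα i))
  have h1 : ∀ j i, ((α i : ℝ) : ℂ) * (Wᴴ * U) j i =
      ((β j + t * α i : ℝ) : ℂ) * (Wᴴ * K * U) j i := by
    intro j i
    have h2 := (Finset.sum_eq_zero_iff_of_nonneg fun j _ => Finset.sum_nonneg fun i _ =>
      mul_nonneg (hnn j i) (Complex.normSq_nonneg _)).mp h0 j (Finset.mem_univ _)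
    have h3 := (Finset.sum_eq_zero_iff_of_nonneg fun i _ =>
      mul_nonneg (hnn j i) (Complex.normSq_nonneg _)).mp h2 i (Finset.mem_univ _)
    rcases (hnn j i).eq_or_lt with h | h
    · have h4 : t * α i = 0 := by nlinarith [hβ j, mul_nonneg ht.le (hα i)]
      have h5 : α i = 0 := (mul_eq_zero.mp h4).resolve_left ht.ne'
      rw [← h, h5]
      simp
    · have h4 := Complex.normSq_eq_zero.mp ((mul_eq_zero.mp h3).resolve_left h.ne')
      have hne : ((β j + t * α i : ℝ) : ℂ) ≠ 0 := Complex.ofReal_ne_zero.mpr h.ne'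
      rw [sub_eq_zero.mp h4, Complex.ofReal_div]
      field_simp
  have h2 : Wᴴ * A * U = Wᴴ * (B * K + (t : ℂ) • (K * A)) * U := by
    have e1 : Wᴴ * A * U = Wᴴ * U * diagonal (fun i => (α i : ℂ)) := by
      rw [hA]; simp only [Matrix.mul_assoc, hU', Matrix.mul_one]
    have e2 : Wᴴ * (B * K) * U = diagonal (fun i => (β i : ℂ)) * (Wᴴ * K * U) := by
      calc Wᴴ * (B * K) * U = (Wᴴ * W) * diagonal (fun i => (β i : ℂ)) * (Wᴴ * K * U) := by
            rw [hB]; simp only [Matrix.mul_assoc]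
        _ = _ := by rw [hW', Matrix.one_mul]
    have e3 : Wᴴ * (K * A) * U = Wᴴ * K * U * diagonal (fun i => (α i : ℂ)) := by
      rw [hA]; simp only [Matrix.mul_assoc, hU', Matrix.mul_one]
    rw [Matrix.mul_add, Matrix.add_mul, Matrix.mul_smul, Matrix.smul_mul, e1, e2, e3]
    ext j i
    have := h1 j i
    push_cast at this
    simp only [mul_diagonal, diagonal_mul, Matrix.add_apply, Matrix.smul_apply, smul_eq_mul]
    linear_combination this
  have h3 : ∀ M : Matrix n n ℂ, W * (Wᴴ * M * U) * Uᴴ = M := fun M => by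
    calc W * (Wᴴ * M * U) * Uᴴ = (W * Wᴴ) * M * (U * Uᴴ) := by
          simp only [Matrix.mul_assoc]
      _ = M := by rw [hU, hW, Matrix.one_mul, Matrix.mul_one]
  calc A = W * (Wᴴ * A * U) * Uᴴ := (h3 A).symm
    _ = _ := by rw [h2, h3]

lemma sum_weight_mul_eq (hA : A = U * diagonal (fun i => (α i : ℂ)) * Uᴴ) (j : n) :
    ∑ i, Complex.normSq ((Wᴴ * U) j i) * α i = ((Wᴴ * A * W) j j).re := by
  have h : Wᴴ * A * W = (Wᴴ * U) * (diagonal (fun i => (α i : ℂ)) * (Wᴴ * U)ᴴ) := by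
    rw [hA]
    simp only [conjTranspose_mul, conjTranspose_conjTranspose, Matrix.mul_assoc]
  rw [h]
  generalize Wᴴ * U = D
  simp only [Matrix.mul_apply, diagonal_apply, ite_mul, zero_mul, Finset.sum_ite_eq,
    Finset.mem_univ, if_true, conjTranspose_apply, Complex.re_sum]
  refine Finset.sum_congr rfl fun i _ => ?_
  simp [Complex.normSq_apply]
  ring

lemma sum_weight_eq_one (hU' : Uᴴ * U = 1) (hW : W * Wᴴ = 1) (i : n) :
    ∑ j, Complex.normSq ((Wᴴ * U) j i) = 1 := by
  have h : (Wᴴ * U)ᴴ * (Wᴴ * U) = 1 := by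
    calc (Wᴴ * U)ᴴ * (Wᴴ * U) = Uᴴ * (W * Wᴴ) * U := by
          simp only [conjTranspose_mul, conjTranspose_conjTranspose, Matrix.mul_assoc]
      _ = 1 := by rw [hW, Matrix.mul_one, hU']
  have h1 := congrArg Complex.re (congrFun (congrFun h i) i)
  rw [Matrix.mul_apply, Complex.re_sum, Matrix.one_apply_eq, Complex.one_re] at h1
  rw [← h1]
  refine Finset.sum_congr rfl fun j _ => ?_
  simp [Complex.normSq_apply]

end eigenbases

/-! ### Relative entropy under a block measurement -/

lemma sum_prod_sum {m n : Type*} [Fintype m] [Fintype n] (f : (n × n) ⊕ m → ℝ) :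
    ∑ k, f k = ∑ j, ∑ i, f (Sum.inl (j, i)) + ∑ y, f (Sum.inr y) := by
  rw [Fintype.sum_sum_type, Fintype.sum_prod_type]

/-- The block-diagonal matrix acting as the scalar `k y` on the block of `y`. -/
def blockScalar {Y : Type*} [DecidableEq Y] (κ : Type*) [DecidableEq κ] (k : Y → ℝ) :
    Matrix (Y × κ) (Y × κ) ℂ :=
  diagonal fun p => (k p.1 : ℂ)

lemma blockScalar_conjTranspose {Y κ : Type*} [DecidableEq Y] [DecidableEq κ] (k : Y → ℝ) :
    (blockScalar κ k)ᴴ = blockScalar κ k := by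
  simp only [blockScalar, diagonal_conjTranspose]
  congr 1
  funext p
  simp

lemma re_trace_eq_sum {Y κ : Type*} [Fintype Y] [Fintype κ]
    {A : Matrix (Y × κ) (Y × κ) ℂ} {a : Y → ℝ}
    (ha : ∀ y, ∑ i, A (y, i) (y, i) = (a y : ℂ)) : A.trace.re = ∑ y, a y := by
  simp [trace, Fintype.sum_prod_type, ha]

section measurement

variable {Y κ : Type*} [Fintype Y] [DecidableEq Y] [Fintype κ] [DecidableEq κ]

lemma trace_mul_blockScalar {A : Matrix (Y × κ) (Y × κ) ℂ} {a : Y → ℝ}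
    (ha : ∀ y, ∑ i, A (y, i) (y, i) = (a y : ℂ)) (k : Y → ℝ) :
    (A * blockScalar κ k).trace.re = ∑ y, a y * k y := by
  have h : (A * blockScalar κ k).trace = ∑ y, (a y : ℂ) * (k y : ℂ) := by
    simp only [trace, blockScalar, diag_apply, mul_diagonal, Fintype.sum_prod_type,
      ← Finset.sum_mul, ha]
  rw [h, Complex.re_sum]
  exact Finset.sum_congr rfl fun y _ => by rw [← Complex.ofReal_mul, Complex.ofReal_re]

lemma blockScalar_mul (k l : Y → ℝ) :
    blockScalar κ k * blockScalar κ l = blockScalar κ fun y => k y * l y := by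
  simp [blockScalar, diagonal_mul_diagonal]

lemma trace_blockScalar_mul_mul_blockScalar {A : Matrix (Y × κ) (Y × κ) ℂ} {a : Y → ℝ}
    (ha : ∀ y, ∑ i, A (y, i) (y, i) = (a y : ℂ)) (k : Y → ℝ) :
    (blockScalar κ k * A * blockScalar κ k).trace.re = ∑ y, a y * (k y * k y) := by
  rw [trace_mul_comm, ← Matrix.mul_assoc, blockScalar_mul, trace_mul_comm,
    trace_mul_blockScalar ha]

lemma two_mul_sub_sub_eq {a b t : ℝ} (ha : 0 ≤ a) (hb : 0 ≤ b) (ht : 0 < t) :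
    2 * (a * (a / (b + t * a))) - b * (a / (b + t * a) * (a / (b + t * a))) -
      t * (a * (a / (b + t * a) * (a / (b + t * a)))) = a ^ 2 / (b + t * a) := by
  rcases ha.eq_or_lt with rfl | h
  · simp
  · have : b + t * a ≠ 0 := (add_pos_of_nonneg_of_pos hb (mul_pos ht h)).ne'
    field_simp
    ring

lemma div_div_add_eq (a b t : ℝ) : a / (b / a + t) = a ^ 2 / (b + t * a) := by
  by_cases h : a = 0
  · simp [h]
  · rw [show b / a + t = (b + t * a) / a by field_simp, div_div_eq_mul_div, sq]

variable {A B U W : Matrix (Y × κ) (Y × κ) ℂ} {α β : Y × κ → ℝ} {a b : Y → ℝ}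

lemma sum_sq_div_le_and_eq (hU : U * Uᴴ = 1) (hU' : Uᴴ * U = 1) (hW : W * Wᴴ = 1)
    (hW' : Wᴴ * W = 1)
    (hA : A = U * diagonal (fun i => (α i : ℂ)) * Uᴴ)
    (hB : B = W * diagonal (fun i => (β i : ℂ)) * Wᴴ)
    (hα : ∀ i, 0 ≤ α i) (hβ : ∀ i, 0 ≤ β i)
    (ha : ∀ y, ∑ i, A (y, i) (y, i) = (a y : ℂ))
    (hb : ∀ y, ∑ i, B (y, i) (y, i) = (b y : ℂ))
    (ha0 : ∀ y, 0 ≤ a y) (hb0 : ∀ y, 0 ≤ b y) {t : ℝ} (ht : 0 < t) :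
    (∑ y, a y ^ 2 / (b y + t * a y) ≤
      ∑ j, ∑ i, Complex.normSq ((Wᴴ * U) j i) * (α i ^ 2 / (β j + t * α i))) ∧
    ((∑ y, a y ^ 2 / (b y + t * a y) =
      ∑ j, ∑ i, Complex.normSq ((Wᴴ * U) j i) * (α i ^ 2 / (β j + t * α i))) →
      A = B * blockScalar κ (fun y => a y / (b y + t * a y)) +
        (t : ℂ) • (blockScalar κ (fun y => a y / (b y + t * a y)) * A)) := by
  obtain ⟨K, hK⟩ : ∃ K, K = blockScalar κ (fun y => a y / (b y + t * a y)) := ⟨_, rfl⟩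
  have hval : 2 * (A * K).trace.re - (Kᴴ * B * K).trace.re - t * (K * A * Kᴴ).trace.re =
      ∑ y, a y ^ 2 / (b y + t * a y) := by
    rw [hK, blockScalar_conjTranspose, trace_mul_blockScalar ha,
      trace_blockScalar_mul_mul_blockScalar ha, trace_blockScalar_mul_mul_blockScalar hb,
      Finset.mul_sum, Finset.mul_sum, ← Finset.sum_sub_distrib, ← Finset.sum_sub_distrib]
    exact Finset.sum_congr rfl fun y _ => two_mul_sub_sub_eq (ha0 y) (hb0 y) ht
  rw [← hK]
  constructor
  · have h := sum_weight_div_sub_eq hU hU' hW hA hB hα hβ K ht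
    rw [hval] at h
    refine sub_nonneg.mp (h ▸ Finset.sum_nonneg fun j _ => Finset.sum_nonneg fun i _ => ?_)
    exact mul_nonneg (add_nonneg (hβ j) (mul_nonneg ht.le (hα i))) (Complex.normSq_nonneg _)
  · intro heq
    exact eq_mul_add_smul_mul_of_sum_eq hU hU' hW hW' hA hB hα hβ K ht (by rw [hval, heq])

/-- Monotonicity of the relative entropy under the measurement of the block index, together
with the first-order condition satisfied in the equality case. -/
lemma relEntropy_measurement (hU : U * Uᴴ = 1) (hU' : Uᴴ * U = 1) (hW : W * Wᴴ = 1)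
    (hW' : Wᴴ * W = 1)
    (hA : A = U * diagonal (fun i => (α i : ℂ)) * Uᴴ)
    (hB : B = W * diagonal (fun i => (β i : ℂ)) * Wᴴ)
    (hα : ∀ i, 0 ≤ α i) (hβ : ∀ i, 0 ≤ β i)
    (hAB : ∀ j, ((Wᴴ * A * W) j j).re ≤ β j)
    (ha : ∀ y, ∑ i, A (y, i) (y, i) = (a y : ℂ))
    (hb : ∀ y, ∑ i, B (y, i) (y, i) = (b y : ℂ))
    (ha0 : ∀ y, 0 ≤ a y) (hab : ∀ y, a y ≤ b y) :
    (∑ y, a y * (Real.log (a y) - Real.log (b y)) ≤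
      ∑ i, α i * Real.log (α i) - ∑ j, ((Wᴴ * A * W) j j).re * Real.log (β j)) ∧
    ((∑ y, a y * (Real.log (a y) - Real.log (b y)) =
      ∑ i, α i * Real.log (α i) - ∑ j, ((Wᴴ * A * W) j j).re * Real.log (β j)) →
      ∀ t : ℝ, 0 < t → A = B * blockScalar κ (fun y => a y / (b y + t * a y)) +
        (t : ℂ) • (blockScalar κ (fun y => a y / (b y + t * a y)) * A)) := by
  have hb0 : ∀ y, 0 ≤ b y := fun y => (ha0 y).trans (hab y)
  have hw0 : ∀ j i, 0 ≤ Complex.normSq ((Wᴴ * U) j i) := fun _ _ => Complex.normSq_nonneg _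
  let c : ((Y × κ) × (Y × κ)) ⊕ Y → ℝ :=
    Sum.elim (fun p => Complex.normSq ((Wᴴ * U) p.1 p.2) * α p.2) (fun y => -a y)
  let s : ((Y × κ) × (Y × κ)) ⊕ Y → ℝ :=
    Sum.elim (fun p => β p.1 / α p.2) (fun y => b y / a y)
  have hpos : ∀ j i, Complex.normSq ((Wᴴ * U) j i) * α i ≠ 0 → 0 < β j ∧ 0 < α i := by
    intro j i h
    have h1 := (mul_nonneg (hw0 j i) (hα i)).lt_of_ne' h
    refine ⟨lt_of_lt_of_le ?_ (hAB j), (hα i).lt_of_ne' (right_ne_zero_of_mul h)⟩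
    rw [← sum_weight_mul_eq hA]
    exact h1.trans_le (Finset.single_le_sum
      (f := fun i => Complex.normSq ((Wᴴ * U) j i) * α i)
      (fun i _ => mul_nonneg (hw0 j i) (hα i)) (Finset.mem_univ i))
  have hposa : ∀ y, a y ≠ 0 → 0 < b y ∧ 0 < a y := fun y h =>
    have := (ha0 y).lt_of_ne' h
    ⟨this.trans_le (hab y), this⟩
  have hc : ∑ k, c k = 0 := by
    simp only [c, sum_prod_sum, Sum.elim_inl, Sum.elim_inr,
      sum_weight_mul_eq hA, Finset.sum_neg_distrib, ← re_trace_eq_sum ha]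
    rw [← trace_conj_of_unitary hW A, trace, Complex.re_sum]
    simp
  have hs : ∀ k, c k ≠ 0 → 0 < s k := by
    rintro (⟨j, i⟩ | y) h
    · exact div_pos (hpos j i h).1 (hpos j i h).2
    · exact div_pos (hposa y (neg_ne_zero.mp h)).1 (hposa y (neg_ne_zero.mp h)).2
  have hF : ∀ t, ∑ k, c k / (s k + t) =
      (∑ j, ∑ i, Complex.normSq ((Wᴴ * U) j i) * (α i ^ 2 / (β j + t * α i))) -
        ∑ y, a y ^ 2 / (b y + t * a y) := by
    intro t
    simp only [c, s, sum_prod_sum, Sum.elim_inl, Sum.elim_inr,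
      neg_div, Finset.sum_neg_distrib, mul_div_assoc, div_div_add_eq, sub_eq_add_neg]
  have hL : ∑ k, c k * Real.log (s k) =
      ∑ y, a y * (Real.log (a y) - Real.log (b y)) -
      (∑ i, α i * Real.log (α i) - ∑ j, ((Wᴴ * A * W) j j).re * Real.log (β j)) := by
    have h1 : ∀ j i, Complex.normSq ((Wᴴ * U) j i) * α i * Real.log (β j / α i) =
        Complex.normSq ((Wᴴ * U) j i) * α i * Real.log (β j) -
          Complex.normSq ((Wᴴ * U) j i) * (α i * Real.log (α i)) := by
      intro j i
      by_cases h : Complex.normSq ((Wᴴ * U) j i) * α i = 0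
      · rw [← mul_assoc, h]; simp
      · rw [Real.log_div (hpos j i h).1.ne' (hpos j i h).2.ne']; ring
    have h2 : ∀ y, -a y * Real.log (b y / a y) =
        a y * (Real.log (a y) - Real.log (b y)) := by
      intro y
      by_cases h : a y = 0
      · simp [h]
      · rw [Real.log_div (hposa y h).1.ne' (hposa y h).2.ne']; ring
    simp only [c, s, sum_prod_sum, Sum.elim_inl, Sum.elim_inr,
      h1, h2, Finset.sum_sub_distrib, ← Finset.sum_mul, sum_weight_mul_eq hA]
    rw [Finset.sum_comm (f := fun j i =>
      Complex.normSq ((Wᴴ * U) j i) * (α i * Real.log (α i)))]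
    simp only [← Finset.sum_mul, sum_weight_eq_one hU' hW, one_mul, mul_sub,
      Finset.sum_sub_distrib]
    ring
  have key := fun (t : ℝ) (ht : 0 < t) =>
    sum_sq_div_le_and_eq hU hU' hW hW' hA hB hα hβ ha hb ha0 hb0 ht
  have hF0 : ∀ t : ℝ, 0 < t → 0 ≤ ∑ k, c k / (s k + t) := fun t ht => by
    rw [hF]
    exact sub_nonneg.mpr (key t ht).1
  constructor
  · have := sum_mul_log_nonpos c s hc hs hF0
    rw [hL] at this
    exact sub_nonpos.mp this
  · intro heq t ht
    have := sum_div_add_eq_zero_of_sum_mul_log_eq_zero c s hc hs hF0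
      (by rw [hL, heq, sub_self]) ht
    rw [hF] at this
    exact (key t ht).2 (sub_eq_zero.mp this).symm

lemma apply_eq_mul_div_and_commute (hAh : A.IsHermitian) (hBh : B.IsHermitian)
    (ha0 : ∀ y, 0 ≤ a y) (hab : ∀ y, a y ≤ b y)
    (h : ∀ t : ℝ, 0 < t → A = B * blockScalar κ (fun y => a y / (b y + t * a y)) +
      (t : ℂ) • (blockScalar κ (fun y => a y / (b y + t * a y)) * A)) (p q : Y × κ) :
    A p q = B p q * ((a q.1 / b q.1 : ℝ) : ℂ) ∧
      (a p.1 / b p.1 = a q.1 / b q.1 ∨ B p q = 0) := by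
  have hk : ∀ (t : ℝ), 0 < t → ∀ y, a y / (b y + t * a y) * (1 + t * (a y / b y)) = a y / b y ∧
      0 < 1 + t * (a y / b y) := by
    intro t ht y
    have hb0 := (ha0 y).trans (hab y)
    refine ⟨?_, by have := div_nonneg (ha0 y) hb0; positivity⟩
    rcases hb0.eq_or_lt with h0 | h0
    · have : a y = 0 := le_antisymm (h0 ▸ hab y) (ha0 y)
      simp [this]
    · have h1 : b y + t * a y ≠ 0 := by have := ha0 y; positivity
      rw [show 1 + t * (a y / b y) = (b y + t * a y) / b y by field_simp,
        div_mul_div_cancel₀ h1]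
  have hrel : ∀ p q : Y × κ, ∀ t : ℝ, 0 < t →
      A p q * (1 + t * ((a q.1 / b q.1 : ℝ) : ℂ)) =
        B p q * ((a q.1 / b q.1 : ℝ) : ℂ) * (1 + t * ((a p.1 / b p.1 : ℝ) : ℂ)) := by
    intro p q t ht
    have h1 := congrFun (congrFun (h t ht) p) q
    simp only [blockScalar, Matrix.add_apply, Matrix.smul_apply, mul_diagonal, diagonal_mul,
      smul_eq_mul] at h1
    obtain ⟨hp, hp'⟩ := hk t ht p.1
    obtain ⟨hq, hq'⟩ := hk t ht q.1
    revert h1 hp hq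
    generalize a p.1 / (b p.1 + t * a p.1) = kp
    generalize a q.1 / (b q.1 + t * a q.1) = kq
    intro h1 hp hq
    have hp2 : (kp : ℂ) * (1 + t * ((a p.1 / b p.1 : ℝ) : ℂ)) = ((a p.1 / b p.1 : ℝ) : ℂ) := by
      exact_mod_cast hp
    have hq2 : (kq : ℂ) * (1 + t * ((a q.1 / b q.1 : ℝ) : ℂ)) = ((a q.1 / b q.1 : ℝ) : ℂ) := by
      exact_mod_cast hq
    generalize ((a p.1 / b p.1 : ℝ) : ℂ) = Ep at *
    generalize ((a q.1 / b q.1 : ℝ) : ℂ) = Eq at *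
    linear_combination (1 + t * Ep) * (1 + t * Eq) * h1 + B p q * (1 + t * Ep) * hq2 +
      t * A p q * (1 + t * Eq) * hp2
  have hmul : ∀ p q : Y × κ, A p q = B p q * ((a q.1 / b q.1 : ℝ) : ℂ) := by
    intro p q
    have h1 := hrel p q 1 one_pos
    have h2 := hrel p q 2 two_pos
    push_cast at h1 h2 ⊢
    linear_combination 2 * h1 - h2
  refine ⟨hmul p q, ?_⟩
  have h1 := hmul q p
  rw [← hAh.apply, ← hBh.apply, Complex.star_def, ← Complex.conj_ofReal, ← map_mul] at h1
  have h2 := (starRingEnd ℂ).injective h1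
  rw [hmul p q, ← sub_eq_zero, ← mul_sub, mul_eq_zero, sub_eq_zero, Complex.ofReal_inj] at h2
  exact h2.symm.imp Eq.symm id

end measurement

/-! ### Equality in the Holevo bound for a block measurement -/

lemma Matrix.IsHermitian.eq_conj_diagonal {n : Type*} [Fintype n] [DecidableEq n]
    {A : Matrix n n ℂ} (h : A.IsHermitian) :
    A = (h.eigenvectorUnitary : Matrix n n ℂ) * diagonal (fun i => (h.eigenvalues i : ℂ)) *
      (h.eigenvectorUnitary : Matrix n n ℂ)ᴴ := by
  conv_lhs => rw [h.spectral_theorem, Unitary.conjStarAlgAut_apply]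
  rfl

lemma vonNeumannEntropy_eq {n : Type*} [Fintype n] [DecidableEq n]
    {A : Matrix n n ℂ} (h : A.IsHermitian) : vonNeumannEntropy A =
      -(∑ i, h.eigenvalues i * Real.log (h.eigenvalues i)) / Real.log 2 := by
  rw [vonNeumannEntropy, dif_pos h, shannonEntropy_eq]

theorem eq_mul_condProb_of_entropy_eq {X Y κ : Type*} [Fintype X] [Fintype Y] [DecidableEq Y]
    [Fintype κ] [DecidableEq κ] (Γ : X → Matrix (Y × κ) (Y × κ) ℂ)
    (hΓ : ∀ x, (Γ x).PosSemidef) (P : X → Y → ℝ) (hP0 : ∀ x y, 0 ≤ P x y)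
    (hP : ∀ x y, ∑ i, Γ x (y, i) (y, i) = (P x y : ℂ))
    (hent : vonNeumannEntropy (∑ x, Γ x) - ∑ x, vonNeumannEntropy (Γ x) =
      shannonEntropy (fun y => ∑ x, P x y) - shannonEntropy (fun p : X × Y => P p.1 p.2))
    (x : X) (p q : Y × κ) :
    Γ x p q = (∑ x, Γ x) p q * ((P x q.1 / ∑ x', P x' q.1 : ℝ) : ℂ) ∧
      (P x p.1 / ∑ x', P x' p.1 = P x q.1 / ∑ x', P x' q.1 ∨ (∑ x, Γ x) p q = 0) := by
  obtain ⟨B, hBdef⟩ : ∃ B, B = ∑ x, Γ x := ⟨_, rfl⟩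
  obtain ⟨b, hbdef⟩ : ∃ b : Y → ℝ, ∀ y, b y = ∑ x, P x y := ⟨_, fun _ => rfl⟩
  simp only [← hBdef, ← hbdef] at hent ⊢
  have hBpsd : B.PosSemidef := hBdef ▸ posSemidef_sum _ fun x _ => hΓ x
  have hBh := hBpsd.isHermitian
  have hb : ∀ y, ∑ i, B (y, i) (y, i) = (b y : ℂ) := by
    intro y
    simp only [hBdef, Matrix.sum_apply, hbdef, Complex.ofReal_sum]
    rw [Finset.sum_comm]
    exact Finset.sum_congr rfl fun x _ => hP x y
  have hPb : ∀ x y, P x y ≤ b y := fun x y => by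
    rw [hbdef]
    exact Finset.single_le_sum (f := fun x => P x y) (fun x _ => hP0 x y) (Finset.mem_univ x)
  obtain ⟨W, hWdef⟩ : ∃ W, W = (hBh.eigenvectorUnitary : Matrix (Y × κ) (Y × κ) ℂ) := ⟨_, rfl⟩
  have hW : W * Wᴴ = 1 := hWdef ▸ Unitary.coe_mul_star_self hBh.eigenvectorUnitary
  have hW' : Wᴴ * W = 1 := hWdef ▸ Unitary.coe_star_mul_self hBh.eigenvectorUnitary
  have hB : B = W * diagonal (fun i => (hBh.eigenvalues i : ℂ)) * Wᴴ :=
    hWdef ▸ hBh.eq_conj_diagonal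
  have hWB : ∀ j, ∑ x, ((Wᴴ * Γ x * W) j j).re = hBh.eigenvalues j := by
    intro j
    have h1 : ∑ x, Wᴴ * Γ x * W = diagonal (fun i => (hBh.eigenvalues i : ℂ)) := by
      rw [← Finset.sum_mul, ← Finset.mul_sum, ← hBdef]
      calc Wᴴ * B * W
          = (Wᴴ * W) * diagonal (fun i => (hBh.eigenvalues i : ℂ)) * (Wᴴ * W) := by
            conv_lhs => rw [hB]
            simp only [Matrix.mul_assoc]
        _ = _ := by rw [hW', Matrix.one_mul, Matrix.mul_one]
    have h2 := congrArg Complex.re (congrFun (congrFun h1 j) j)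
    rw [Matrix.sum_apply, Complex.re_sum, diagonal_apply_eq, Complex.ofReal_re] at h2
    exact h2
  have hWΓ : ∀ x j, 0 ≤ ((Wᴴ * Γ x * W) j j).re := fun x j =>
    (Complex.nonneg_iff.mp ((hΓ x).conjTranspose_mul_mul_same W).diag_nonneg).1
  have key := fun x => relEntropy_measurement
    (Unitary.coe_mul_star_self (hΓ x).isHermitian.eigenvectorUnitary)
    (Unitary.coe_star_mul_self (hΓ x).isHermitian.eigenvectorUnitary) hW hW'
    (hΓ x).isHermitian.eq_conj_diagonal hB (hΓ x).eigenvalues_nonneg hBpsd.eigenvalues_nonneg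
    (fun j => hWB j ▸ Finset.single_le_sum (f := fun x => ((Wᴴ * Γ x * W) j j).re)
      (fun x _ => hWΓ x j) (Finset.mem_univ x))
    (hP x) hb (hP0 x) (hPb x)
  have hsum : ∑ x, ∑ y, P x y * (Real.log (P x y) - Real.log (b y)) =
      ∑ x, (∑ i, (hΓ x).isHermitian.eigenvalues i *
        Real.log ((hΓ x).isHermitian.eigenvalues i) -
          ∑ j, ((Wᴴ * Γ x * W) j j).re * Real.log (hBh.eigenvalues j)) := by
    have h0 : ∑ p : X × Y, P p.1 p.2 * Real.log (P p.1 p.2) =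
        ∑ x, ∑ y, P x y * Real.log (P x y) := Fintype.sum_prod_type _
    rw [vonNeumannEntropy_eq hBh, shannonEntropy_eq, shannonEntropy_eq, h0] at hent
    simp_rw [vonNeumannEntropy_eq (hΓ _).isHermitian] at hent
    rw [← Finset.sum_div, ← sub_div, ← sub_div,
      div_left_inj' (Real.log_pos one_lt_two).ne', Finset.sum_neg_distrib] at hent
    have h1 : ∑ x, ∑ j, ((Wᴴ * Γ x * W) j j).re * Real.log (hBh.eigenvalues j) =
        ∑ j, hBh.eigenvalues j * Real.log (hBh.eigenvalues j) := by
      rw [Finset.sum_comm]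
      simp only [← Finset.sum_mul, hWB]
    have h2 : ∑ x, ∑ y, P x y * Real.log (b y) = ∑ y, b y * Real.log (b y) := by
      rw [Finset.sum_comm]
      simp only [← Finset.sum_mul, ← hbdef]
    simp only [mul_sub, Finset.sum_sub_distrib, h1, h2]
    linarith
  have heq := (Finset.sum_eq_sum_iff_of_le fun x _ => (key x).1).mp hsum x (Finset.mem_univ x)
  exact apply_eq_mul_div_and_commute (hΓ x).isHermitian hBh (hP0 x) (hPb x) ((key x).2 heq) p q

/-! ### Block structure of the ensemble -/

theorem exists_dependentPart_structure {𝒳 𝒴 : Type*} [Fintype 𝒳] [Fintype 𝒴] [DecidableEq 𝒴]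
    {d : ℕ} (P : 𝒳 × 𝒴 → ℝ)
    (hP0 : ∀ p, 0 ≤ P p) (hP1 : ∑ p, P p = 1)
    (Γ : 𝒳 → Matrix (𝒴 × Fin d) (𝒴 × Fin d) ℂ) (hΓ : ∀ x, (Γ x).PosSemidef)
    (htr : ∀ x y, ∑ i, Γ x (y, i) (y, i) = (P (x, y) : ℂ))
    (hent : vonNeumannEntropy (∑ x, Γ x) - ∑ x, vonNeumannEntropy (Γ x) =
      shannonEntropy (margY P) - shannonEntropy P) :
    ∃ (n : ℕ) (ν : 𝒴 → Fin n → ℂ)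
      (σ : {v // v ∈ Finset.univ.image (condXY P)} →
        Matrix (Fin n × Fin d) (Fin n × Fin d) ℂ),
      (∀ y, ∑ i, ‖ν y i‖ ^ 2 = 1) ∧
      (∀ y y', y ≠ y' → ∑ i, (starRingEnd ℂ) (ν y i) * ν y' i = 0) ∧
      (∀ q, IsDensityMatrix (σ q)) ∧
      (∀ x : 𝒳, ∀ p q : {v // v ∈ Finset.univ.image (condXY P)} × Fin n × Fin d,
        (∑ y ∈ Finset.univ.filter fun y => condXY P y = p.1.1,
          ∑ y' ∈ Finset.univ.filter fun y' => condXY P y' = q.1.1,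
            ν y p.2.1 * (starRingEnd ℂ) (ν y' q.2.1) * Γ x (y, p.2.2) (y', q.2.2)) =
        if p.1 = q.1 then
          ((∑ y ∈ Finset.univ.filter fun y => condXY P y = p.1.1, P (x, y) : ℝ) : ℂ) *
            σ p.1 (p.2.1, p.2.2) (q.2.1, q.2.2)
        else 0) := by
  have hcore := eq_mul_condProb_of_entropy_eq Γ hΓ (fun x y => P (x, y))
    (fun x y => hP0 (x, y)) htr hent
  obtain ⟨B, hB⟩ : ∃ B, B = ∑ x, Γ x := ⟨_, rfl⟩
  rw [← hB] at hcore
  have hΓB : ∀ x p q, Γ x p q = B p q * (condXY P q.1 x : ℂ) := fun x p q => (hcore x p q).1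
  have hB0 : ∀ p q : 𝒴 × Fin d, condXY P p.1 ≠ condXY P q.1 → B p q = 0 := by
    intro p q h
    obtain ⟨x, hx⟩ := Function.ne_iff.mp h
    exact (hcore x p q).2.resolve_left hx
  have hBpsd : B.PosSemidef := hB ▸ posSemidef_sum _ fun x _ => hΓ x
  have hBtr : ∀ y, ∑ i, B (y, i) (y, i) = (margY P y : ℂ) := by
    intro y
    simp only [hB, Matrix.sum_apply, margY, Complex.ofReal_sum]
    rw [Finset.sum_comm]
    exact Finset.sum_congr rfl fun x _ => htr x y
  have hm0 : ∀ y, 0 ≤ margY P y := fun y => Finset.sum_nonneg fun x _ => hP0 _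
  have hPm : ∀ x y, P (x, y) = condXY P y x * margY P y := by
    intro x y
    rw [condXY]
    by_cases h : margY P y = 0
    · rw [h, mul_zero]
      exact (Finset.sum_eq_zero_iff_of_nonneg fun x _ => hP0 (x, y)).mp h x (Finset.mem_univ x)
    · exact (div_mul_cancel₀ _ h).symm
  have hd : Nonempty (Fin d) := by
    by_contra h
    rw [not_nonempty_iff] at h
    have : ∀ p, P p = 0 := fun p => by
      have := htr p.1 p.2
      rw [Finset.univ_eq_empty, Finset.sum_empty] at this
      exact_mod_cast this.symm
    simp [this] at hP1
  let e := Fintype.equivFin 𝒴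
  let mass : (𝒳 → ℝ) → ℝ := fun v => ∑ y ∈ Finset.univ.filter fun y => condXY P y = v, margY P y
  have hmass : ∀ v, 0 ≤ mass v := fun v => Finset.sum_nonneg fun y _ => hm0 y
  have hPmass : ∀ v x, ∑ y ∈ Finset.univ.filter (fun y => condXY P y = v), P (x, y) =
      v x * mass v := by
    intro v x
    rw [Finset.mul_sum]
    refine Finset.sum_congr rfl fun y hy => ?_
    rw [hPm, (Finset.mem_filter.mp hy).2]
  let D : (𝒳 → ℝ) → Matrix (Fin (Fintype.card 𝒴) × Fin d) (Fin (Fintype.card 𝒴) × Fin d) ℂ :=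
    fun v => diagonal fun p => if condXY P (e.symm p.1) = v then 1 else 0
  let g : Fin (Fintype.card 𝒴) × Fin d → 𝒴 × Fin d := fun p => (e.symm p.1, p.2)
  let S : (𝒳 → ℝ) → Matrix (Fin (Fintype.card 𝒴) × Fin d) (Fin (Fintype.card 𝒴) × Fin d) ℂ :=
    fun v => D v * B.submatrix g g * D v
  have hDh : ∀ v, (D v)ᴴ = D v := by
    intro v
    simp only [D, diagonal_conjTranspose]
    congr 1
    funext p
    simp [apply_ite]
  have hSapp : ∀ v p q, S v p q = if condXY P (e.symm p.1) = v ∧ condXY P (e.symm q.1) = v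
      then B (g p) (g q) else 0 := by
    intro v p q
    simp only [S, D, mul_diagonal, diagonal_mul, submatrix_apply, ite_mul, mul_ite, one_mul,
      mul_one, zero_mul, mul_zero, ite_and]
    split_ifs <;> rfl
  have hSpsd : ∀ v, (S v).PosSemidef := by
    intro v
    have := (hBpsd.submatrix g).mul_mul_conjTranspose_same (D v)
    rwa [hDh] at this
  have hStr : ∀ v, (S v).trace = (mass v : ℂ) := by
    intro v
    simp only [trace, diag_apply, hSapp, and_self, Fintype.sum_prod_type, g]
    rw [Equiv.sum_comp e.symm fun y => ∑ i, if condXY P y = v then B (y, i) (y, i) else 0]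
    simp only [mass, Finset.sum_filter, Complex.ofReal_sum]
    refine Finset.sum_congr rfl fun y _ => ?_
    split_ifs
    · exact hBtr y
    · simp
  have hdens : ∀ q : {v // v ∈ Finset.univ.image (condXY P)},
      ∃ σ : Matrix (Fin (Fintype.card 𝒴) × Fin d) (Fin (Fintype.card 𝒴) × Fin d) ℂ,
        IsDensityMatrix σ ∧ (mass q.1 ≠ 0 → σ = ((mass q.1)⁻¹ : ℂ) • S q.1) := by
    rintro ⟨v, hv⟩
    by_cases h : mass v = 0
    · obtain ⟨y, -, -⟩ := Finset.mem_image.mp hv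
      obtain ⟨i⟩ := hd
      refine ⟨diagonal (Pi.single (e y, i) 1), ⟨PosSemidef.diagonal ?_, ?_⟩,
        fun h' => absurd h h'⟩
      · exact Pi.single_nonneg.mpr zero_le_one
      · simp [trace]
    · refine ⟨((mass v)⁻¹ : ℂ) • S v, ⟨(hSpsd v).smul ?_, ?_⟩, fun _ => rfl⟩
      · rw [← Complex.ofReal_inv]
        exact Complex.zero_le_real.mpr (inv_nonneg.mpr (hmass v))
      · rw [trace_smul, hStr, smul_eq_mul, inv_mul_cancel₀ (Complex.ofReal_ne_zero.mpr h)]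
  choose σ hσ hσS using hdens
  refine ⟨Fintype.card 𝒴, fun y i => if y = e.symm i then 1 else 0, σ, ?_, ?_, hσ, ?_⟩
  · intro y
    simp only [Equiv.eq_symm_apply]
    simp [apply_ite]
  · intro y y' hy
    refine Finset.sum_eq_zero fun i _ => ?_
    by_cases h : y = e.symm i
    · simp [show y' ≠ e.symm i from fun h' => hy (h.trans h'.symm)]
    · simp [h]
  · rintro x ⟨⟨v, hv⟩, i, k⟩ ⟨⟨w, hw⟩, j, l⟩
    have hL : (∑ y ∈ Finset.univ.filter fun y => condXY P y = v,
          ∑ y' ∈ Finset.univ.filter fun y' => condXY P y' = w,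
            (if y = e.symm i then (1 : ℂ) else 0) *
              (starRingEnd ℂ) (if y' = e.symm j then 1 else 0) * Γ x (y, k) (y', l)) =
        if condXY P (e.symm i) = v ∧ condXY P (e.symm j) = w then
          Γ x (e.symm i, k) (e.symm j, l) else 0 := by
      simp only [Finset.sum_filter, apply_ite (starRingEnd ℂ), map_one, map_zero, mul_ite, ite_mul,
        mul_one, one_mul, mul_zero, zero_mul]
      rw [Finset.sum_eq_single (e.symm i) (fun y _ hy => by simp [hy]) (by simp), ite_and]
      refine if_congr Iff.rfl ?_ rfl
      rw [Finset.sum_eq_single (e.symm j) (fun y _ hy => by simp [hy]) (by simp)]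
      simp
    refine hL.trans ?_
    dsimp only
    rw [hPmass]
    by_cases hvw : v = w
    · subst hvw
      rw [if_pos rfl]
      by_cases hm : mass v = 0
      · have hv0 : condXY P (e.symm j) = v → v x = 0 := by
          intro h
          have h1 : margY P (e.symm j) = 0 :=
            (Finset.sum_eq_zero_iff_of_nonneg fun y _ => hm0 y).mp hm _
              (Finset.mem_filter.mpr ⟨Finset.mem_univ _, h⟩)
          rw [← h, condXY, h1, div_zero]
        rw [hm, mul_zero, Complex.ofReal_zero, zero_mul]
        refine ite_eq_right_iff.mpr fun h => ?_
        rw [hΓB, h.2, hv0 h.2, Complex.ofReal_zero, mul_zero]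
      · have hm' : (mass v : ℂ) ≠ 0 := Complex.ofReal_ne_zero.mpr hm
        rw [hσS ⟨v, hv⟩ hm, Matrix.smul_apply, hSapp, smul_eq_mul, Complex.ofReal_mul]
        split_ifs with h
        · rw [hΓB, h.2]
          field_simp
          exact mul_comm _ _
        · simp
    · rw [if_neg fun h => hvw (congrArg Subtype.val h)]
      refine ite_eq_right_iff.mpr fun h => ?_
      rw [hΓB, hB0 _ _ (by rw [h.1, h.2]; exact hvw), zero_mul]

/-! ### The structure theorem -/

lemma posSemidef_sum_mul_conj {m ι κ : Type*} [Fintype m] [Fintype ι] [Fintype κ]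
    (φ : ι → κ → m → ℂ) :
    (Matrix.of fun p q => ∑ i, ∑ k, φ i k p * (starRingEnd ℂ) (φ i k q)).PosSemidef := by
  have h : (Matrix.of fun p q => ∑ i, ∑ k, φ i k p * (starRingEnd ℂ) (φ i k q)) =
      ∑ i, ∑ k, vecMulVec (φ i k) (star (φ i k)) := by
    ext p q
    simp [Matrix.sum_apply, vecMulVec_apply]
  rw [h]
  exact posSemidef_sum _ fun i _ => posSemidef_sum _ fun k _ =>
    posSemidef_vecMulVec_self_star _

/-- for a non-leaking tripartite embedding `ψ` of `P`, there exist
isometries `U : |x⟩ ↦ |f_X(x)⟩|μ_x⟩` and `V : |y⟩ ↦ |f_Y(y)⟩|ν_y⟩` (i.e. unit vectors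
`μ_x`, mutually orthogonal within each fibre of `f_X`, and similarly `ν_y`) such that
after measuring `A` (yielding `X`), tracing out `E` and `A'` and applying `V` to `B`,
the resulting state equals `Σ_{x,ỹ} P_{X,Y↘X}(x,ỹ) |x⟩⟨x| ⊗ |ỹ⟩⟨ỹ| ⊗ σ^{ỹ}` with the
density matrices `σ^{ỹ}` depending only on `ỹ`, and symmetrically with the roles of
the two parties exchanged. -/
theorem nonleaking_tripartite_embedding_structure {dE dA dB : ℕ}
    (P : 𝒳 × 𝒴 → ℝ) (hP0 : ∀ p, 0 ≤ P p) (hP1 : ∑ p, P p = 1)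
    (ψ : Fin dE × 𝒳 × 𝒴 × Fin dA × Fin dB → ℂ)
    (hprob : ∀ x y, ∑ e, ∑ a, ∑ b, ‖ψ (e, x, y, a, b)‖ ^ 2 = P (x, y))
    (hcorr1 : StriXYBp P ψ = mutualInfo P)
    (hcorr2 : StriXApY P ψ = mutualInfo P)
    (hnl1 : StriXBB P ψ = mutualInfo P)
    (hnl2 : StriAAY P ψ = mutualInfo P) :
    ∃ (m n : ℕ) (μ : 𝒳 → Fin m → ℂ) (ν : 𝒴 → Fin n → ℂ)
      (σ : {v // v ∈ Finset.univ.image (condXY P)} →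
        Matrix (Fin n × Fin dB) (Fin n × Fin dB) ℂ)
      (τ : {u // u ∈ Finset.univ.image (condYX P)} →
        Matrix (Fin m × Fin dA) (Fin m × Fin dA) ℂ),
      (∀ x, ∑ i, ‖μ x i‖ ^ 2 = 1) ∧
      (∀ x x', x ≠ x' → condYX P x = condYX P x' →
        ∑ i, (starRingEnd ℂ) (μ x i) * μ x' i = 0) ∧
      (∀ y, ∑ i, ‖ν y i‖ ^ 2 = 1) ∧
      (∀ y y', y ≠ y' → condXY P y = condXY P y' →
        ∑ i, (starRingEnd ℂ) (ν y i) * ν y' i = 0) ∧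
      (∀ q, IsDensityMatrix (σ q)) ∧
      (∀ q, IsDensityMatrix (τ q)) ∧
      (∀ x : 𝒳, ∀ p q : {v // v ∈ Finset.univ.image (condXY P)} × Fin n × Fin dB,
        (∑ y ∈ Finset.univ.filter fun y => condXY P y = p.1.1,
          ∑ y' ∈ Finset.univ.filter fun y' => condXY P y' = q.1.1,
            ν y p.2.1 * (starRingEnd ℂ) (ν y' q.2.1) *
              (∑ e, ∑ a, ψ (e, x, y, a, p.2.2) * (starRingEnd ℂ) (ψ (e, x, y', a, q.2.2)))) =
        if p.1 = q.1 then
          ((∑ y ∈ Finset.univ.filter fun y => condXY P y = p.1.1, P (x, y) : ℝ) : ℂ) *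
            σ p.1 (p.2.1, p.2.2) (q.2.1, q.2.2)
        else 0) ∧
      (∀ y : 𝒴, ∀ p q : {u // u ∈ Finset.univ.image (condYX P)} × Fin m × Fin dA,
        (∑ x ∈ Finset.univ.filter fun x => condYX P x = p.1.1,
          ∑ x' ∈ Finset.univ.filter fun x' => condYX P x' = q.1.1,
            μ x p.2.1 * (starRingEnd ℂ) (μ x' q.2.1) *
              (∑ e, ∑ b, ψ (e, x, y, p.2.2, b) * (starRingEnd ℂ) (ψ (e, x', y, q.2.2, b)))) =
        if p.1 = q.1 then
          ((∑ x ∈ Finset.univ.filter fun x => condYX P x = p.1.1, P (x, y) : ℝ) : ℂ) *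
            τ p.1 (p.2.1, p.2.2) (q.2.1, q.2.2)
        else 0) := by
  have hnorm : ∀ z : ℂ, z * (starRingEnd ℂ) z = ((‖z‖ ^ 2 : ℝ) : ℂ) := fun z => by
    rw [Complex.mul_conj, Complex.normSq_eq_norm_sq]
  let Γ : 𝒳 → Matrix (𝒴 × Fin dB) (𝒴 × Fin dB) ℂ := fun x p q =>
    ∑ e, ∑ a, ψ (e, x, p.1, a, p.2) * (starRingEnd ℂ) (ψ (e, x, q.1, a, q.2))
  let Λ : 𝒴 → Matrix (𝒳 × Fin dA) (𝒳 × Fin dA) ℂ := fun y p q =>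
    ∑ e, ∑ b, ψ (e, p.1, y, p.2, b) * (starRingEnd ℂ) (ψ (e, q.1, y, q.2, b))
  have hΓ : ∀ x, (Γ x).PosSemidef := fun x =>
    posSemidef_sum_mul_conj fun e a (p : 𝒴 × Fin dB) => ψ (e, x, p.1, a, p.2)
  have hΛ : ∀ y, (Λ y).PosSemidef := fun y =>
    posSemidef_sum_mul_conj fun e b (p : 𝒳 × Fin dA) => ψ (e, p.1, y, p.2, b)
  have hΓtr : ∀ x y, ∑ i, Γ x (y, i) (y, i) = (P (x, y) : ℂ) := by
    intro x y
    simp only [Γ, hnorm, ← hprob, Complex.ofReal_sum]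
    rw [Finset.sum_comm]
    exact Finset.sum_congr rfl fun e _ => Finset.sum_comm
  have hΛtr : ∀ y x, ∑ i, Λ y (x, i) (x, i) = (P (x, y) : ℂ) := by
    intro y x
    simp only [Λ, hnorm, ← hprob, Complex.ofReal_sum]
    exact Finset.sum_comm
  have hΓsum : triBB ψ = ∑ x, Γ x := by
    ext p q
    rw [Matrix.sum_apply]
    exact Finset.sum_comm
  have hΛsum : triAA ψ = ∑ y, Λ y := by
    ext p q
    rw [Matrix.sum_apply]
    exact Finset.sum_comm
  have hΓent : vonNeumannEntropy (∑ x, Γ x) - ∑ x, vonNeumannEntropy (Γ x) =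
      shannonEntropy (margY P) - shannonEntropy P := by
    have h : vonNeumannEntropy (triXBB ψ) = ∑ x, vonNeumannEntropy (Γ x) :=
      vonNeumannEntropy_blockDiagonal Γ fun x => (hΓ x).isHermitian
    rw [StriXBB, mutualInfo, h, hΓsum] at hnl1
    linarith
  have hΛent : vonNeumannEntropy (∑ y, Λ y) - ∑ y, vonNeumannEntropy (Λ y) =
      shannonEntropy (margY fun p : 𝒴 × 𝒳 => P p.swap) -
        shannonEntropy (fun p : 𝒴 × 𝒳 => P p.swap) := by
    have h : vonNeumannEntropy (triYAA ψ) = ∑ y, vonNeumannEntropy (Λ y) :=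
      vonNeumannEntropy_blockDiagonal Λ fun y => (hΛ y).isHermitian
    have h2 : shannonEntropy (fun p : 𝒴 × 𝒳 => P p.swap) = shannonEntropy P :=
      shannonEntropy_comp_equiv (Equiv.prodComm 𝒴 𝒳) P
    have h3 : (margY fun p : 𝒴 × 𝒳 => P p.swap) = margX P := rfl
    rw [StriAAY, mutualInfo, h, hΛsum] at hnl2
    rw [h2, h3]
    linarith
  obtain ⟨n, ν, σ, hν, hν', hσ, hΓσ⟩ := exists_dependentPart_structure P hP0 hP1 Γ hΓ hΓtr hΓent
  obtain ⟨m, μ, τ, hμ, hμ', hτ, hΛτ⟩ := exists_dependentPart_structure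
    (fun p : 𝒴 × 𝒳 => P p.swap) (fun p => hP0 p.swap)
    ((Equiv.sum_comp (Equiv.prodComm 𝒴 𝒳) P).trans hP1) Λ hΛ hΛtr hΛent
  exact ⟨m, n, μ, ν, σ, τ, hμ, fun x x' h _ => hμ' x x' h, hν, fun y y' h _ => hν' y y' h,
    hσ, hτ, hΓσ, hΛτ⟩

end
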